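/- Collapsing of the e/l-hierarchy: if a p/t-net S is e/l-persistent, then there exists k ∈ ℕ such that S is e/l-k-persistent. -/

import Mathlib

open Classical in
/-- The marking obtained by firing transition `a` in marking `M`:
tokens are removed from entries of `a` and added to exits of `a`. -/
noncomputable def fire {P T : Type} (Fpt : P → T → Prop) (Ftp : T → P → Prop)
    (M : P → ℕ) (a : T) : P → ℕ :=
  fun p => M p - (if Fpt p a then 1 else 0) + (if Ftp a p then 1 else 0)

/-- Transition `a` is enabled in marking `M` (all its entries are marked). -/
def Enabled {P T : Type} (Fpt : P → T → Prop) (M : P → ℕ) (a : T) : Prop :=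
  ∀ p, Fpt p a → 1 ≤ M p

/-- `Fires Fpt Ftp M w M'` means the string `w` is enabled in `M` and its
execution leads from `M` to `M'` (the predicate `M w M'`). -/
inductive Fires {P T : Type} (Fpt : P → T → Prop) (Ftp : T → P → Prop) :
    (P → ℕ) → List T → (P → ℕ) → Prop
  | nil (M : P → ℕ) : Fires Fpt Ftp M [] M
  | cons {M M'' : P → ℕ} {a : T} {w : List T} :
      Enabled Fpt M a → Fires Fpt Ftp (fire Fpt Ftp M a) w M'' →
      Fires Fpt Ftp M (a :: w) M''

/-- The string `w` is enabled in marking `M` (the predicate `M w`). -/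
def EnabledSeq {P T : Type} (Fpt : P → T → Prop) (Ftp : T → P → Prop)
    (M : P → ℕ) (w : List T) : Prop :=
  ∃ M', Fires Fpt Ftp M w M'

/-- `M` is reachable from the initial marking `M0`. -/
def Reachable {P T : Type} (Fpt : P → T → Prop) (Ftp : T → P → Prop)
    (M0 M : P → ℕ) : Prop :=
  ∃ w : List T, Fires Fpt Ftp M0 w M

/-- The step `M a` is e/l-k-persistent: the execution of `a` pushes the
execution of any other enabled action away for at most `k` steps. -/
def StepELkPersistent {P T : Type} (Fpt : P → T → Prop) (Ftp : T → P → Prop)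
    (M : P → ℕ) (a : T) (k : ℕ) : Prop :=
  ∀ b : T, b ≠ a → Enabled Fpt M b →
    ∃ w : List T, w.length ≤ k ∧ EnabledSeq Fpt Ftp M (a :: (w ++ [b]))

/-- The marking `M` is e/l-k-persistent: for every action `a` enabled in `M`,
the step `M a` is e/l-k-persistent. -/
def MarkingELkPersistent {P T : Type} (Fpt : P → T → Prop) (Ftp : T → P → Prop)
    (M : P → ℕ) (k : ℕ) : Prop :=
  ∀ a : T, Enabled Fpt M a → StepELkPersistent Fpt Ftp M a k

/-- The net is e/l-k-persistent: every reachable marking is e/l-k-persistent. -/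
def NetELkPersistent {P T : Type} (Fpt : P → T → Prop) (Ftp : T → P → Prop)
    (M0 : P → ℕ) (k : ℕ) : Prop :=
  ∀ M : P → ℕ, Reachable Fpt Ftp M0 M → MarkingELkPersistent Fpt Ftp M k

theorem Enabled.mono {P T : Type} {Fpt : P → T → Prop} {M N : P → ℕ} {a : T}
    (h : Enabled Fpt M a) (hMN : M ≤ N) : Enabled Fpt N a :=
  fun p hp => (h p hp).trans (hMN p)

theorem fire_mono {P T : Type} (Fpt : P → T → Prop) (Ftp : T → P → Prop)
    {M N : P → ℕ} (hMN : M ≤ N) (a : T) : fire Fpt Ftp M a ≤ fire Fpt Ftp N a :=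
  fun p => Nat.add_le_add_right (Nat.sub_le_sub_right (hMN p) _) _

theorem EnabledSeq.mono {P T : Type} {Fpt : P → T → Prop} {Ftp : T → P → Prop}
    {M N : P → ℕ} {w : List T} (h : EnabledSeq Fpt Ftp M w) (hMN : M ≤ N) :
    EnabledSeq Fpt Ftp N w := by
  obtain ⟨M', h⟩ := h
  induction h generalizing N with
  | nil => exact ⟨N, .nil N⟩
  | cons ha _ ih =>
    obtain ⟨N', hN'⟩ := ih (fire_mono Fpt Ftp hMN _)
    exact ⟨N', .cons (ha.mono hMN) hN'⟩

/-- In a net with finitely many places, if every marking of a set `S` enables `a v b` for some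
string `v`, then the length of such a `v` can be bounded uniformly over `S`. -/
theorem exists_uniform_length_bound {P T : Type} [Finite P] (Fpt : P → T → Prop)
    (Ftp : T → P → Prop) (S : Set (P → ℕ)) (a b : T)
    (h : ∀ M ∈ S, ∃ v : List T, EnabledSeq Fpt Ftp M (a :: (v ++ [b]))) :
    ∃ k : ℕ, ∀ M ∈ S, ∃ w : List T, w.length ≤ k ∧ EnabledSeq Fpt Ftp M (a :: (w ++ [b])) := by
  by_contra! hk
  choose f hf hlong using hk
  obtain ⟨g, hg⟩ := (wellQuasiOrdered_le (α := P → ℕ)).exists_monotone_subseq f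
  obtain ⟨v, hv⟩ := h _ (hf (g 0))
  exact hlong (g v.length) v (g.strictMono.le_apply) (hv.mono (hg 0 _ (Nat.zero_le _)))

/-- **Collapsing of the e/l-hierarchy**: if a p/t-net is e/l-persistent, then
it is e/l-k-persistent for some `k ∈ ℕ`. -/
theorem el_persistent_imp_elk_persistent {P T : Type} [Fintype P] [Fintype T]
    (Fpt : P → T → Prop) (Ftp : T → P → Prop) (M0 : P → ℕ)
    (hel : ∀ M : P → ℕ, Reachable Fpt Ftp M0 M → ∀ a b : T, a ≠ b →
      Enabled Fpt M a → Enabled Fpt M b →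
      ∃ v : List T, EnabledSeq Fpt Ftp M (a :: (v ++ [b]))) :
    ∃ k : ℕ, NetELkPersistent Fpt Ftp M0 k := by
  have key (a b : T) := exists_uniform_length_bound Fpt Ftp
    {M | Reachable Fpt Ftp M0 M ∧ a ≠ b ∧ Enabled Fpt M a ∧ Enabled Fpt M b} a b
    fun M ⟨hM, hab, ha, hb⟩ => hel M hM a b hab ha hb
  choose k hk using key
  refine ⟨Finset.univ.sup fun x : T × T => k x.1 x.2, fun M hM a ha b hba hb => ?_⟩
  obtain ⟨w, hw, hfires⟩ := hk a b M ⟨hM, hba.symm, ha, hb⟩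
  exact ⟨w, hw.trans (Finset.le_sup (f := fun x : T × T => k x.1 x.2) (Finset.mem_univ (a, b))),
    hfires⟩
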